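/- Let 0 < h_1 < … < h_n < 1 be reals, let P be an invertible real n×n matrix whose columns have unit Euclidean norm, let j_1 ≤ j_2 be integers and m := j_2 − j_1 + 1. Let B be a real symmetric positive definite n×n matrix and for j = j_1, …, j_2 set B(j) := diag(2^{j h_1}, …, 2^{j h_n}) · B · diag(2^{j h_1}, …, 2^{j h_n}). Let a_ν and K_{ν,j} := ν/(a_ν 2^j) be positive with a_ν → ∞ and K_{ν,j} → ∞ as ν → ∞. For each j let B̂_ν(j) be random real symmetric almost surely positive definite n×n matrices such that the stacked random vector (√K_{ν,j} · vec_S(B̂_ν(j) − B(j)))_{j = j_1, …, j_2} converges in distribution to a centered Gaussian distribution on ℝ^{m·n(n+1)/2} with positive definite covariance matrix. Set W_ν(j) := P D_{a_ν} B̂_ν(j) D_{a_ν} Pᵀ and W̄_ν(j) := P D_{a_ν} B(j) D_{a_ν} Pᵀ. Then the ℝ^{mn}-valued random vectors ((√K_{ν,j} (log λ_q(W_ν(j)) − log λ_q(W̄_ν(j))))_{q=1,…,n})_{j=j_1,…,j_2} converge in distribution, as ν → ∞, to a centered mn-variate Gaussian distribution N(0, Σ_λ) whose variances Σ_λ(jj)_{qq}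 are strictly positive for every j and q. -/

import Mathlib

/-!
With `H = P⁻¹ P⁻ᵀ`, the eigenvalues of `P D A D Pᵀ`, `D = Dmat h a`, are the numbers `t` for which
`t H y = D A D y` has a nonzero solution. Substituting `t = a ^ (2 h_q) s` and rescaling each
coordinate of `y` by a suitable power of `a` turns this into `s e H e v = d A d v`, where the
diagonal matrices `d` and `e` contain only nonpositive powers of `a`. Since the exponents are
distinct, `d` converges to the indicator of `{i ≥ q}` and `e` to that of `{i ≤ q}` as `a → ∞`. The
limiting system is solved by a pair of Schur-complement vectors, and it is nondegenerate there, so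
the implicit function theorem gives a solution for all large `a` and all `A` near `A₀`
(`exists_rescaled_solution`). The `n` eigenvalues found this way live on the separated scales
`a ^ (2 h_q)`, hence they are all the eigenvalues, in increasing order (`eigR_eq_scaled`).

For two eigenpairs with the same `H`, the difference of the eigenvalues is given exactly by a
bilinear expression in `A - A₀` (`eigenpair_difference`). Convergence of the rescaled eigenvectors
therefore yields a first-order expansion of `log λ_q`, uniform in large `a`, whose limiting
gradient is `κ b bᵀ` with `κ > 0` and `b q = 1` (`log_eigR_expansion`). In particular the gradient
is nonzero.

The theorem then follows from the delta method (`tendstoInDistribution_of_linearization`): the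
normalized log-eigenvalues are asymptotically a linear image `T X` of the normalized vector `X` of
upper-triangular entries, the limit is Gaussian with covariance `T C Tᵀ`, and its diagonal is
positive because every row of `T` is nonzero and `C` is positive definite. Measurability of the
sorted eigenvalues comes from their sublevel sets being closed (`isClosed_eigR_le`).
-/

open Matrix MeasureTheory Filter Topology

/-- The `q`-th smallest eigenvalue (`q` 0-indexed) of a real symmetric matrix. -/
noncomputable def eigR {n : ℕ} (M : Matrix (Fin n) (Fin n) ℝ) (q : Fin n) : ℝ :=
  if h : M.IsHermitian then (h.eigenvalues ∘ Tuple.sort h.eigenvalues) q else 0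

/-- `D_a := diag(a^{h_1},…,a^{h_n})`. -/
noncomputable def Dmat {n : ℕ} (h : Fin n → ℝ) (a : ℝ) : Matrix (Fin n) (Fin n) ℝ :=
  Matrix.diagonal fun i => a ^ h i

/-- `diag(2^{j h_1},…,2^{j h_n})`. -/
noncomputable def Emat {n : ℕ} (h : Fin n → ℝ) (j : ℤ) : Matrix (Fin n) (Fin n) ℝ :=
  Matrix.diagonal fun i => (2 : ℝ) ^ ((j : ℝ) * h i)

/-- A measure on `ι → ℝ` is a centered Gaussian with covariance matrix `C` iff it is a
probability measure all of whose one-dimensional linear marginals are centered real Gaussians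
with the appropriate variances. -/
def IsCenteredGaussian {ι : Type*} [Fintype ι] (μG : Measure (ι → ℝ))
    (C : Matrix ι ι ℝ) : Prop :=
  IsProbabilityMeasure μG ∧ ∀ c : ι → ℝ,
    μG.map (fun x => ∑ i, c i * x i) =
      ProbabilityTheory.gaussianReal 0 (∑ i, ∑ j, c i * C i j * c j).toNNReal

/-- Convergence in distribution (weak convergence of laws) of a sequence of random vectors. -/
def TendstoInDistribution {Ω : Type*} [MeasurableSpace Ω] (μ : Measure Ω) {E : Type*}
    [TopologicalSpace E] [MeasurableSpace E] (X : ℕ → Ω → E) (μE : Measure E) : Prop :=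
  ∀ f : BoundedContinuousFunction E ℝ,
    Tendsto (fun k => ∫ ω, f (X k ω) ∂μ) atTop (𝓝 (∫ x, f x ∂μE))

/-! ### Sorted eigenvalues -/

lemma eigR_eq_comp_sort {n : ℕ} {A : Matrix (Fin n) (Fin n) ℝ} (hA : A.IsHermitian) :
    eigR A = hA.eigenvalues ∘ Tuple.sort hA.eigenvalues := by
  funext q
  rw [eigR, dif_pos hA]

/-- A monotone enumeration of the roots of the characteristic polynomial is the sorted spectrum. -/
lemma eigR_eq_of_charpoly {n : ℕ} {A : Matrix (Fin n) (Fin n) ℝ} (hA : A.IsHermitian)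
    {l : Fin n → ℝ} (hl : Monotone l)
    (hc : A.charpoly = ∏ i, (Polynomial.X - Polynomial.C (l i))) : eigR A = l := by
  have hr : A.charpoly.roots = Multiset.map l Finset.univ.val := by
    rw [hc, Polynomial.roots_prod]
    · simp
    · simp [Finset.prod_ne_zero_iff, Polynomial.X_sub_C_ne_zero]
  rw [hA.roots_charpoly_eq_eigenvalues] at hr
  have hm := Tuple.monotone_sort hA.eigenvalues
  have hr2 : Multiset.map (hA.eigenvalues ∘ Tuple.sort hA.eigenvalues) Finset.univ.val
      = Multiset.map l Finset.univ.val := by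
    rw [← hr, ← Multiset.map_map, Multiset.map_univ_val_equiv]
    rfl
  rw [eigR_eq_comp_sort hA]
  simp only [Fin.univ_val_map, Multiset.coe_eq_coe] at hr2
  exact List.ofFn_injective (hr2.eq_of_pairwise' hm.sortedLE_ofFn.pairwise
    hl.sortedLE_ofFn.pairwise)

/-- `n` eigenpairs with strictly increasing eigenvalues exhaust the spectrum, in order. -/
lemma eigR_eq_of_eigenpairs {n : ℕ} {A : Matrix (Fin n) (Fin n) ℝ} (hA : A.IsHermitian)
    {l : Fin n → ℝ} (hl : StrictMono l)
    (hx : ∀ q, ∃ x : Fin n → ℝ, x ≠ 0 ∧ A *ᵥ x = l q • x) : eigR A = l := by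
  have hmem : ∀ q, ∃ i, hA.eigenvalues i = l q := by
    intro q
    obtain ⟨x, hx0, hx⟩ := hx q
    have h1 : Module.End.HasEigenvalue (Matrix.toLin' A) (l q) :=
      Module.End.hasEigenvalue_of_hasEigenvector (x := x)
        ⟨by rw [Module.End.mem_eigenspace_iff]; simpa using hx, hx0⟩
    have h2 := h1.mem_spectrum
    rw [Matrix.spectrum_toLin', hA.spectrum_real_eq_range_eigenvalues] at h2
    exact h2
  choose s hs using hmem
  have hinj : Function.Injective s := fun p q hpq => hl.injective (by rw [← hs, ← hs, hpq])
  let σ : Equiv.Perm (Fin n) := Equiv.ofBijective s (Finite.injective_iff_bijective.1 hinj)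
  refine eigR_eq_of_charpoly hA hl.monotone ?_
  rw [hA.charpoly_eq, ← Equiv.prod_comp σ]
  refine Finset.prod_congr rfl fun i _ => ?_
  simp [σ, hs]

/-- Every symmetric matrix is diagonalised by an orthogonal matrix whose columns are ordered by
increasing eigenvalue. -/
lemma exists_orthogonal_diag {n : ℕ} {A : Matrix (Fin n) (Fin n) ℝ} (hA : A.IsHermitian) :
    ∃ U : Matrix (Fin n) (Fin n) ℝ, Uᵀ * U = 1 ∧ Uᵀ * A * U = diagonal (eigR A) := by
  set σ := Tuple.sort hA.eigenvalues with hσ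
  set V : Matrix (Fin n) (Fin n) ℝ := hA.eigenvectorUnitary.1 with hV
  have hVV : Vᵀ * V = 1 := by
    have := Unitary.coe_star_mul_self hA.eigenvectorUnitary
    simpa [star_eq_conjTranspose] using this
  have hd : Vᵀ * A * V = diagonal hA.eigenvalues := by
    have := hA.conjStarAlgAut_star_eigenvectorUnitary
    rw [Unitary.conjStarAlgAut_apply] at this
    simpa [star_eq_conjTranspose, Function.comp_def] using this
  refine ⟨V.submatrix id σ, ?_, ?_⟩
  · have : (V.submatrix id σ)ᵀ * V.submatrix id σ = (Vᵀ * V).submatrix σ σ := by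
      ext i j; simp [Matrix.mul_apply]
    rw [this, hVV]
    simp
  · have : (V.submatrix id σ)ᵀ * A * V.submatrix id σ = (Vᵀ * A * V).submatrix σ σ := by
      ext i j; simp [Matrix.mul_apply]
    rw [this, hd, Matrix.submatrix_diagonal_equiv]
    rw [eigR_eq_comp_sort hA]

lemma eigR_eq_of_orthogonal_diag {n : ℕ} {A U : Matrix (Fin n) (Fin n) ℝ} (hA : A.IsHermitian)
    {l : Fin n → ℝ} (hl : Monotone l) (hU : Uᵀ * U = 1) (hd : Uᵀ * A * U = diagonal l) :
    eigR A = l := by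
  refine eigR_eq_of_charpoly hA hl ?_
  have hU' : U * Uᵀ = 1 := mul_eq_one_comm.1 hU
  have : (Uᵀ * A * U).charpoly = A.charpoly := by
    rw [charpoly_mul_comm, ← mul_assoc, hU', one_mul]
  rw [← this, hd, charpoly_diagonal]

lemma eigR_monotone {n : ℕ} {A : Matrix (Fin n) (Fin n) ℝ} (hA : A.IsHermitian) :
    Monotone (eigR A) := by
  rw [eigR_eq_comp_sort hA]
  exact Tuple.monotone_sort _

/-- The sublevel sets of the sorted eigenvalues are closed: they are projections, along the
compact set of orthogonal matrices, of closed sets. -/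
lemma isClosed_eigR_le {n : ℕ} (q : Fin n) (t : ℝ) :
    IsClosed {A : Matrix (Fin n) (Fin n) ℝ | A.IsHermitian ∧ eigR A q ≤ t} := by
  let K : Set (Fin n → Fin n → ℝ) :=
    {U | (Matrix.of U)ᵀ * Matrix.of U = 1}
  have hK : IsCompact K := by
    refine Metric.isCompact_of_isClosed_isBounded ?_ ?_
    · exact isClosed_eq (by fun_prop) continuous_const
    · refine (Metric.isBounded_closedBall (x := (0 : Fin n → Fin n → ℝ)) (r := 1)).subset ?_
      intro U hU
      rw [mem_closedBall_zero_iff, pi_norm_le_iff_of_nonneg zero_le_one]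
      intro i
      rw [pi_norm_le_iff_of_nonneg zero_le_one]
      intro j
      have h1 : ∑ k, U k j * U k j = 1 := by
        have := congrFun (congrFun hU j) j
        simpa [Matrix.mul_apply] using this
      have h2 : U i j * U i j ≤ 1 := by
        rw [← h1]
        exact Finset.single_le_sum (f := fun k => U k j * U k j)
          (fun k _ => mul_self_nonneg _) (Finset.mem_univ i)
      rw [Real.norm_eq_abs, abs_le_one_iff_mul_self_le_one]
      exact h2
  have : CompactSpace K := isCompact_iff_compactSpace.1 hK
  let M : Matrix (Fin n) (Fin n) ℝ × K → Matrix (Fin n) (Fin n) ℝ :=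
    fun p => (Matrix.of p.2.1)ᵀ * p.1 * Matrix.of p.2.1
  have hM : Continuous M := by
    have h2 : Continuous fun p : Matrix (Fin n) (Fin n) ℝ × K => Matrix.of p.2.1 :=
      (continuous_subtype_val (p := fun U : Fin n → Fin n → ℝ => U ∈ K)).comp
        (continuous_snd (X := Matrix (Fin n) (Fin n) ℝ))
    exact (h2.matrix_transpose.matrix_mul continuous_fst).matrix_mul h2
  let S : Set (Matrix (Fin n) (Fin n) ℝ × K) :=
    {p | p.1.IsHermitian ∧ M p = diagonal (fun i => M p i i) ∧
      (∀ i j, i ≤ j → M p i i ≤ M p j j) ∧ M p q q ≤ t}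
  have hS : IsClosed S := by
    refine IsClosed.inter ?_ (IsClosed.inter ?_ (IsClosed.inter ?_ ?_))
    · exact isClosed_eq (continuous_fst.matrix_conjTranspose) continuous_fst
    · exact isClosed_eq hM (Continuous.matrix_diagonal
        (continuous_pi fun i => hM.matrix_elem i i))
    · have : {p : Matrix (Fin n) (Fin n) ℝ × K | ∀ i j, i ≤ j → M p i i ≤ M p j j}
          = ⋂ i, ⋂ j, ⋂ (_ : i ≤ j), {p | M p i i ≤ M p j j} := by
        ext p; simp
      show IsClosed {p : Matrix (Fin n) (Fin n) ℝ × K | ∀ i j, i ≤ j → M p i i ≤ M p j j}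
      rw [this]
      exact isClosed_iInter fun i => isClosed_iInter fun j => isClosed_iInter fun _ =>
        isClosed_le (hM.matrix_elem i i) (hM.matrix_elem j j)
    · exact isClosed_le (hM.matrix_elem q q) continuous_const
  have := isClosedMap_fst_of_compactSpace (X := Matrix (Fin n) (Fin n) ℝ) (Y := K) S hS
  convert! this using 1
  ext A
  constructor
  · rintro ⟨hA, hq⟩
    obtain ⟨U, hU, hd⟩ := exists_orthogonal_diag hA
    refine ⟨(A, ⟨U, hU⟩), ⟨hA, ?_, ?_, ?_⟩, rfl⟩
    · show Uᵀ * A * U = diagonal fun i => (Uᵀ * A * U) i i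
      rw [hd]; simp
    · show ∀ i j, i ≤ j → (Uᵀ * A * U) i i ≤ (Uᵀ * A * U) j j
      rw [hd]
      intro i j hij
      simpa using eigR_monotone hA hij
    · show (Uᵀ * A * U) q q ≤ t
      rw [hd]; simpa using hq
  · rintro ⟨⟨A', U⟩, ⟨hA, hd, hm, hq⟩, rfl⟩
    refine ⟨hA, ?_⟩
    have := eigR_eq_of_orthogonal_diag hA (l := fun i => M (A', U) i i)
      (fun i j hij => hm i j hij) U.2 hd
    rw [this]
    exact hq

lemma measurable_eigR {n : ℕ} {Ω : Type*} [MeasurableSpace Ω]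
    {X : Ω → Matrix (Fin n) (Fin n) ℝ} (hX : ∀ i j, Measurable fun ω => X ω i j)
    (hs : ∀ ω, (X ω).IsHermitian) (q : Fin n) : Measurable fun ω => eigR (X ω) q := by
  have hX' : Measurable (fun ω => (fun i j => X ω i j : Fin n → Fin n → ℝ)) :=
    measurable_pi_iff.2 fun i => measurable_pi_iff.2 fun j => hX i j
  refine measurable_of_Iic fun t => ?_
  have hc : IsClosed {A : Fin n → Fin n → ℝ |
      Matrix.IsHermitian (Matrix.of A) ∧ eigR (Matrix.of A) q ≤ t} := isClosed_eigR_le q t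
  have := hX' hc.measurableSet
  convert! this using 1
  ext ω
  simp only [Set.mem_preimage, Set.mem_Iic, Set.mem_ofPred_eq]
  exact ⟨fun h => ⟨hs ω, h⟩, fun h => h.2⟩

/-! ### The rescaled eigenvector equation -/

/-- A vector supported on `S` on which `H` vanishes tested against `S` is zero. -/
lemma eq_zero_of_supported {n : ℕ} {H : Matrix (Fin n) (Fin n) ℝ} (hH : H.PosDef)
    (S : Finset (Fin n)) {w : Fin n → ℝ} (hw : ∀ i ∉ S, w i = 0)
    (hHw : ∀ i ∈ S, (H *ᵥ w) i = 0) : w = 0 := by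
  by_contra hne
  have h1 := hH.dotProduct_mulVec_pos hne
  have h2 : star w ⬝ᵥ (H *ᵥ w) = 0 := by
    simp only [dotProduct, star_trivial]
    refine Finset.sum_eq_zero fun i _ => ?_
    by_cases hi : i ∈ S
    · rw [hHw i hi, mul_zero]
    · rw [hw i hi, zero_mul]
  exact h1.ne' h2

/-- The vector spanning the `H`-orthogonal complement of the coordinates in `S` within those of
`S ∪ {q}`, normalised to have `q`-th entry `1`. The value `(H u)_q` is a Schur complement. -/
lemma exists_schur_vector {n : ℕ} {H : Matrix (Fin n) (Fin n) ℝ} (hH : H.PosDef)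
    (S : Finset (Fin n)) {q : Fin n} (hq : q ∉ S) :
    ∃ u : Fin n → ℝ, u q = 1 ∧ (∀ i ∉ S, i ≠ q → u i = 0) ∧ (∀ i ∈ S, (H *ᵥ u) i = 0) ∧
      0 < (H *ᵥ u) q := by
  classical
  let φ : (Fin n → ℝ) →ₗ[ℝ] (Fin n → ℝ) :=
    { toFun := fun w i => if i ∈ S then (H *ᵥ fun k => if k ∈ S then w k else 0) i else w i
      map_add' := by
        intro x y
        funext i
        have : (fun k => if k ∈ S then (x + y) k else 0)
            = (fun k => if k ∈ S then x k else 0) + fun k => if k ∈ S then y k else 0 := by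
          funext k; by_cases hk : k ∈ S <;> simp [hk]
        rw [this, mulVec_add]
        by_cases hi : i ∈ S <;> simp [hi]
      map_smul' := by
        intro c x
        funext i
        have : (fun k => if k ∈ S then (c • x) k else 0)
            = c • (fun k => if k ∈ S then x k else 0) := by
          funext k; by_cases hk : k ∈ S <;> simp [hk]
        rw [this, mulVec_smul]
        by_cases hi : i ∈ S <;> simp [hi] }
  have hφ : ∀ w i, φ w i = if i ∈ S then (H *ᵥ fun k => if k ∈ S then w k else 0) i else w i :=
    fun _ _ => rfl
  have hinj : Function.Injective φ := by
    rw [← LinearMap.ker_eq_bot, LinearMap.ker_eq_bot']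
    intro w hw
    have h0 : ∀ i ∉ S, w i = 0 := by
      intro i hi
      have := congrFun hw i
      simpa [hφ, hi] using this
    have hw' : (fun k => if k ∈ S then w k else 0) = w := by
      funext k
      by_cases hk : k ∈ S <;> simp [hk, h0]
    refine eq_zero_of_supported hH S h0 fun i hi => ?_
    have := congrFun hw i
    simpa [hφ, hi, hw'] using this
  obtain ⟨w, hw⟩ := LinearMap.surjective_of_injective hinj
    (fun i => if i ∈ S then -(H *ᵥ Pi.single q 1) i else 0)
  have h0 : ∀ i ∉ S, w i = 0 := by
    intro i hi
    have := congrFun hw i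
    simpa [hφ, hi] using this
  have hw' : (fun k => if k ∈ S then w k else 0) = w := by
    funext k
    by_cases hk : k ∈ S <;> simp [hk, h0]
  have hu0 : ∀ i ∉ S, i ≠ q → (w + Pi.single q 1 : Fin n → ℝ) i = 0 := by
    intro i hi hiq
    simp [h0 i hi, hiq]
  have huS : ∀ i ∈ S, (H *ᵥ (w + Pi.single q 1)) i = 0 := by
    intro i hi
    have := congrFun hw i
    simp only [hφ, hi, hw', if_true] at this
    rw [mulVec_add, Pi.add_apply, this]
    ring
  have huq : (w + Pi.single q 1 : Fin n → ℝ) q = 1 := by simp [h0 q hq]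
  refine ⟨w + Pi.single q 1, huq, hu0, huS, ?_⟩
  generalize w + Pi.single q 1 = u at *
  have hne : u ≠ 0 := by
    rintro rfl
    simp at huq
  have hpos := hH.dotProduct_mulVec_pos hne
  have : star u ⬝ᵥ (H *ᵥ u) = (H *ᵥ u) q := by
    simp only [dotProduct, star_trivial]
    rw [Finset.sum_eq_single q]
    · rw [huq, one_mul]
    · intro i _ hi
      by_cases hiS : i ∈ S
      · rw [huS i hiS, mul_zero]
      · rw [hu0 i hiS hi, zero_mul]
    · simp
  rwa [this] at hpos

/-- The system solved by a rescaled eigenpair `(v, s)`: the eigenvector equation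
`s e H e v = d A d v`, with `d`, `e` acting as diagonal matrices, and the normalisation
`v q = 1`. The parameters are `(A, d, e)`. -/
def eigSystem {n : ℕ} (H : Matrix (Fin n) (Fin n) ℝ) (q : Fin n)
    (z : ((Fin n → Fin n → ℝ) × (Fin n → ℝ) × (Fin n → ℝ)) × ((Fin n → ℝ) × ℝ)) :
    (Fin n → ℝ) × ℝ :=
  (fun i => z.2.2 * z.1.2.2 i * ∑ j, H i j * (z.1.2.2 j * z.2.1 j) -
    z.1.2.1 i * ∑ j, z.1.1 i j * (z.1.2.1 j * z.2.1 j), z.2.1 q - 1)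

lemma contDiff_eigSystem {n : ℕ} (H : Matrix (Fin n) (Fin n) ℝ) (q : Fin n) :
    ContDiff ℝ 1 (eigSystem H q) := by
  unfold eigSystem
  fun_prop

lemma fderiv_eigSystem_apply {n : ℕ} (H : Matrix (Fin n) (Fin n) ℝ) (q : Fin n)
    (A : Fin n → Fin n → ℝ) (d e v : Fin n → ℝ) (s : ℝ) (w : Fin n → ℝ) (t : ℝ) :
    fderiv ℝ (eigSystem H q) ((A, d, e), (v, s)) (0, (w, t)) =
      (fun i => t * e i * ∑ j, H i j * (e j * v j) + s * e i * ∑ j, H i j * (e j * w j) -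
        d i * ∑ j, A i j * (d j * w j), w q) := by
  have h1 : HasFDerivAt (eigSystem H q) (fderiv ℝ (eigSystem H q) ((A, d, e), (v, s)))
      ((A, d, e), (v, s)) :=
    ((contDiff_eigSystem H q).differentiable one_ne_zero _).hasFDerivAt
  have h2 : HasDerivAt (fun r : ℝ => (((A, d, e), (v, s)) +
      r • ((0 : (Fin n → Fin n → ℝ) × (Fin n → ℝ) × (Fin n → ℝ)), (w, t)))) (0, (w, t)) 0 := by
    have := ((hasDerivAt_id (0 : ℝ)).smul_const
      ((0 : (Fin n → Fin n → ℝ) × (Fin n → ℝ) × (Fin n → ℝ)), (w, t))).const_add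
      ((A, d, e), (v, s))
    simpa only [one_smul, id] using this
  have h3 := HasFDerivAt.comp_hasDerivAt (f := fun r : ℝ => (((A, d, e), (v, s)) +
      r • ((0 : (Fin n → Fin n → ℝ) × (Fin n → ℝ) × (Fin n → ℝ)), (w, t))))
      (0 : ℝ) (by simpa using h1) h2
  have h4 : HasDerivAt (fun r : ℝ => eigSystem H q (((A, d, e), (v, s)) +
      r • ((0 : (Fin n → Fin n → ℝ) × (Fin n → ℝ) × (Fin n → ℝ)), (w, t))))
      (fun i => t * e i * ∑ j, H i j * (e j * v j) + s * e i * ∑ j, H i j * (e j * w j) -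
        d i * ∑ j, A i j * (d j * w j), w q) 0 := by
    refine HasDerivAt.prodMk ?_ ?_
    · rw [hasDerivAt_pi]
      intro i
      have hlin : ∀ c : Fin n → ℝ, ∀ r : ℝ, ∑ j, c j * (v j + r * w j)
          = ∑ j, c j * v j + r * ∑ j, c j * w j := by
        intro c r
        rw [Finset.mul_sum, ← Finset.sum_add_distrib]
        exact Finset.sum_congr rfl fun j _ => by ring
      have hH : ∀ r : ℝ, ∑ j, H i j * (e j * (v j + r * w j)) = _ := fun r => by
        simpa [mul_assoc] using hlin (fun j => H i j * e j) r
      have hA : ∀ r : ℝ, ∑ j, A i j * (d j * (v j + r * w j)) = _ := fun r => by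
        simpa [mul_assoc] using hlin (fun j => A i j * d j) r
      simp only [Prod.fst_add, Prod.snd_add, Prod.smul_fst, Prod.smul_snd, smul_zero, add_zero,
        Pi.add_apply, Pi.smul_apply, smul_eq_mul, hH, hA]
      have hr := hasDerivAt_id (0 : ℝ)
      have := ((((hr.mul_const t).const_add s).mul_const (e i)).mul
        ((hr.mul_const (∑ j, H i j * (e j * w j))).const_add (∑ j, H i j * (e j * v j)))).sub
        (((hr.mul_const (∑ j, A i j * (d j * w j))).const_add
          (∑ j, A i j * (d j * v j))).const_mul (d i))
      convert! this using 1
      simp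
    · have := (((hasDerivAt_id (0 : ℝ)).mul_const (w q)).const_add (v q)).sub_const 1
      simpa using this
  exact h3.unique h4

/-- The scaling limit of the eigenvector equation. As `d → 1_{≥ q}` and `e → 1_{≤ q}` and
`A → A₀`, the equation has a solution depending continuously on the parameters, by the implicit
function theorem at the limit point. -/
lemma exists_rescaled_solution {n : ℕ} {H A₀ : Matrix (Fin n) (Fin n) ℝ} (hH : H.PosDef)
    (hA : A₀.PosDef) (q : Fin n) :
    ∃ (v₀ : Fin n → ℝ) (ξ : ℝ)
      (ψ : (Fin n → Fin n → ℝ) × (Fin n → ℝ) × (Fin n → ℝ) → (Fin n → ℝ) × ℝ), 0 < ξ ∧ v₀ q = 1 ∧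
      Tendsto ψ (𝓝 (fun i j => A₀ i j, fun i => if q ≤ i then 1 else 0,
        fun i => if i ≤ q then 1 else 0)) (𝓝 (v₀, ξ)) ∧
      ∀ᶠ p in 𝓝 ((fun i j => A₀ i j : Fin n → Fin n → ℝ),
        (fun i => if q ≤ i then 1 else 0 : Fin n → ℝ),
        (fun i => if i ≤ q then 1 else 0 : Fin n → ℝ)), eigSystem H q (p, ψ p) = 0 := by
  classical
  obtain ⟨u, huq, hu0, huS, hupos⟩ := exists_schur_vector hH (Finset.Iio q) (q := q) (by simp)
  obtain ⟨u', huq', hu0', huS', hupos'⟩ :=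
    exists_schur_vector hA (Finset.Ioi q) (q := q) (by simp)
  simp only [Finset.mem_Iio, Finset.mem_Ioi, not_lt] at hu0 huS hu0' huS'
  set d : Fin n → ℝ := fun i => if q ≤ i then 1 else 0 with hd
  set e : Fin n → ℝ := fun i => if i ≤ q then 1 else 0 with he
  -- The limiting equation decouples: coordinates below `q` see only `H`, those above only `A₀`.
  set v : Fin n → ℝ := fun i => if i ≤ q then u i else u' i with hv
  set ξ : ℝ := (A₀ *ᵥ u') q / (H *ᵥ u) q with hξ
  have hξpos : 0 < ξ := div_pos hupos' hupos
  have hev : ∀ j, e j * v j = u j := by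
    intro j
    rcases le_or_gt j q with hj | hj
    · simp [he, hv, hj]
    · simp [he, not_le.2 hj, hu0 j hj.le hj.ne']
  have hdv : ∀ j, d j * v j = u' j := by
    intro j
    rcases lt_trichotomy j q with hj | rfl | hj
    · simp [hd, not_le.2 hj, hu0' j hj.le hj.ne]
    · simp [hd, hv, huq, huq']
    · simp [hd, hv, not_le.2 hj, hj.le]
  set pt : ((Fin n → Fin n → ℝ) × (Fin n → ℝ) × (Fin n → ℝ)) × ((Fin n → ℝ) × ℝ) :=
    ((fun i j => A₀ i j, d, e), (v, ξ)) with hpt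
  have hsol : eigSystem H q pt = 0 := by
    refine Prod.ext ?_ ?_
    · funext i
      simp only [eigSystem, hpt, hev, hdv, Prod.fst_zero, Pi.zero_apply]
      change ξ * e i * (H *ᵥ u) i - d i * (A₀ *ᵥ u') i = 0
      rcases lt_trichotomy i q with hi | rfl | hi
      · simp [hd, not_le.2 hi, huS i hi]
      · simp only [hd, he, le_refl, if_true, hξ]
        field_simp
        ring
      · simp [he, not_le.2 hi, huS' i hi]
    · simp [eigSystem, hpt, hv, huq]
  have hstrict : HasStrictFDerivAt (eigSystem H q) (fderiv ℝ (eigSystem H q) pt) pt :=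
    (contDiff_eigSystem H q).contDiffAt.hasStrictFDerivAt one_ne_zero
  set f₂ := fderiv ℝ (eigSystem H q) pt ∘L
    ContinuousLinearMap.inr ℝ ((Fin n → Fin n → ℝ) × (Fin n → ℝ) × (Fin n → ℝ))
      ((Fin n → ℝ) × ℝ) with hf₂
  -- A kernel vector `(w, t)` has `w q = 0`, and then definiteness of `H` kills the coordinates
  -- below `q`, definiteness of `A₀` those above, and equation `q` gives `t = 0`.
  have hinj : Function.Injective f₂ := by
    rw [injective_iff_map_eq_zero]
    rintro ⟨w, t⟩ hw
    have hw1 : fderiv ℝ (eigSystem H q) pt (0, (w, t)) = 0 := hw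
    rw [hpt, fderiv_eigSystem_apply] at hw1
    have hwq : w q = 0 := congrArg Prod.snd hw1
    have hcomp : ∀ i, t * e i * (H *ᵥ u) i + ξ * e i * (H *ᵥ fun j => e j * w j) i -
        d i * (A₀ *ᵥ fun j => d j * w j) i = 0 := by
      intro i
      have := congrFun (congrArg Prod.fst hw1) i
      simp only [hev] at this
      exact this
    have hew : (fun j => e j * w j) = 0 := by
      refine eq_zero_of_supported hH (Finset.Iio q) ?_ ?_
      · intro i hi
        simp only [Finset.mem_Iio, not_lt] at hi
        rcases hi.eq_or_lt with rfl | hi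
        · simp [hwq]
        · simp [he, not_le.2 hi]
      · intro i hi
        rw [Finset.mem_Iio] at hi
        have := hcomp i
        simpa [hd, he, not_le.2 hi, hi.le, huS i hi, hξpos.ne'] using this
    have hdw : (fun j => d j * w j) = 0 := by
      refine eq_zero_of_supported hA (Finset.Ioi q) ?_ ?_
      · intro i hi
        simp only [Finset.mem_Ioi, not_lt] at hi
        rcases hi.eq_or_lt with rfl | hi
        · simp [hwq]
        · simp [hd, not_le.2 hi]
      · intro i hi
        rw [Finset.mem_Ioi] at hi
        have := hcomp i
        simpa [hd, he, not_le.2 hi, hi.le] using this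
    have ht : t = 0 := by
      have := hcomp q
      rw [hew, hdw] at this
      simpa [he, hupos.ne'] using this
    have hw0 : w = 0 := by
      funext i
      rcases le_total i q with hi | hi
      · simpa [he, hi] using congrFun hew i
      · simpa [hd, hi] using congrFun hdw i
    rw [ht, hw0]
    rfl
  have hinv : f₂.IsInvertible := by
    refine ⟨(LinearEquiv.ofInjectiveEndo (f₂ : ((Fin n → ℝ) × ℝ) →ₗ[ℝ] ((Fin n → ℝ) × ℝ))
      hinj).toContinuousLinearEquiv, ?_⟩
    exact ContinuousLinearMap.ext fun _ => rfl
  refine ⟨v, ξ, hstrict.implicitFunctionOfProdDomain hinv, hξpos, by simp [hv, huq], ?_, ?_⟩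
  · exact hstrict.tendsto_implicitFunctionOfProdDomain hinv
  · have := hstrict.eventually_apply_implicitFunctionOfProdDomain hinv
    rw [hsol] at this
    exact this

/-! ### Asymptotics of the eigenvalues of `P D A D Pᵀ` -/

lemma tendsto_rpow_min {h : ℝ} :
    Tendsto (fun a : ℝ => a ^ min h 0) atTop (𝓝 (if 0 ≤ h then 1 else 0)) := by
  split_ifs with hh
  · simp [min_eq_right hh]
  · rw [not_le] at hh
    rw [min_eq_left hh.le]
    simpa using tendsto_rpow_neg_atTop (neg_pos.2 hh)

/-- For large `a` and `A` near `A₀`, the matrix `H⁻¹ D A D` has an eigenpair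
`(a ^ (2 h_q) s, y)` with `s` and the rescaled eigenvector `a ^ (-h_q) D y` convergent. -/
lemma exists_scaled_eigenpair {n : ℕ} {H A₀ : Matrix (Fin n) (Fin n) ℝ} (hH : H.PosDef)
    (hA : A₀.PosDef) {h : Fin n → ℝ} (hmono : StrictMono h) (q : Fin n) :
    ∃ (b c : Fin n → ℝ) (ξ : ℝ) (y : ℝ × Matrix (Fin n) (Fin n) ℝ → Fin n → ℝ)
      (s : ℝ × Matrix (Fin n) (Fin n) ℝ → ℝ), 0 < ξ ∧ b q = 1 ∧ c q = 1 ∧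
      Tendsto s (atTop ×ˢ 𝓝 A₀) (𝓝 ξ) ∧ Tendsto y (atTop ×ˢ 𝓝 A₀) (𝓝 c) ∧
      Tendsto (fun p i => p.1 ^ (h i - h q) * y p i) (atTop ×ˢ 𝓝 A₀) (𝓝 b) ∧
      ∀ᶠ p in atTop ×ˢ 𝓝 A₀, y p q = 1 ∧ ∀ i, p.1 ^ (2 * h q) * s p * (H *ᵥ y p) i =
        p.1 ^ h i * ∑ j, p.2 i j * (p.1 ^ h j * y p j) := by
  obtain ⟨v, ξ, ψ, hξ, hvq, hψ, hsol⟩ := exists_rescaled_solution hH hA q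
  set d₀ : Fin n → ℝ := fun i => if q ≤ i then 1 else 0
  set e₀ : Fin n → ℝ := fun i => if i ≤ q then 1 else 0
  let d : ℝ → Fin n → ℝ := fun a i => a ^ min (h i - h q) 0
  let e : ℝ → Fin n → ℝ := fun a i => a ^ min (h q - h i) 0
  have hd : Tendsto (fun p : ℝ × Matrix (Fin n) (Fin n) ℝ => d p.1) (atTop ×ˢ 𝓝 A₀) (𝓝 d₀) := by
    refine Tendsto.comp (g := d) (tendsto_pi_nhds.2 fun i => ?_) tendsto_fst
    simpa [d, d₀, hmono.le_iff_le] using tendsto_rpow_min (h := h i - h q)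
  have he : Tendsto (fun p : ℝ × Matrix (Fin n) (Fin n) ℝ => e p.1) (atTop ×ˢ 𝓝 A₀) (𝓝 e₀) := by
    refine Tendsto.comp (g := e) (tendsto_pi_nhds.2 fun i => ?_) tendsto_fst
    simpa [e, e₀, hmono.le_iff_le] using tendsto_rpow_min (h := h q - h i)
  have hAt : Tendsto (fun p : ℝ × Matrix (Fin n) (Fin n) ℝ => (fun i j => p.2 i j :
      Fin n → Fin n → ℝ)) (atTop ×ˢ 𝓝 A₀) (𝓝 (fun i j => A₀ i j)) := tendsto_snd
  have hpar := hAt.prodMk_nhds (hd.prodMk_nhds he)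
  set par : ℝ × Matrix (Fin n) (Fin n) ℝ → (Fin n → Fin n → ℝ) × (Fin n → ℝ) × (Fin n → ℝ) :=
    fun p => (fun i j => p.2 i j, d p.1, e p.1)
  have hψp := hψ.comp hpar
  have hv : Tendsto (fun p => (ψ (par p)).1) (atTop ×ˢ 𝓝 A₀) (𝓝 v) :=
    (continuous_fst.tendsto _).comp hψp
  have hs : Tendsto (fun p => (ψ (par p)).2) (atTop ×ˢ 𝓝 A₀) (𝓝 ξ) :=
    (continuous_snd.tendsto _).comp hψp
  have hpos : ∀ᶠ p : ℝ × Matrix (Fin n) (Fin n) ℝ in atTop ×ˢ 𝓝 A₀, 0 < p.1 :=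
    tendsto_fst.eventually (eventually_gt_atTop 0)
  -- the powers in `d` and `e` are chosen so that `d = a ^ (-h_q) D e`
  have hde : ∀ p : ℝ × Matrix (Fin n) (Fin n) ℝ, 0 < p.1 → ∀ i,
      p.1 ^ (h i - h q) * e p.1 i = d p.1 i := by
    intro p hp i
    simp only [d, e]
    rw [← Real.rpow_add hp]
    congr 1
    rcases le_total (h i) (h q) with hi | hi
    · rw [min_eq_right (by linarith), min_eq_left (by linarith)]; ring
    · rw [min_eq_left (by linarith), min_eq_right (by linarith)]; ring
  refine ⟨d₀ * v, e₀ * v, ξ, fun p => e p.1 * (ψ (par p)).1, fun p => (ψ (par p)).2, hξ, ?_, ?_,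
    hs, he.mul hv, ?_, ?_⟩
  · simp [d₀, hvq]
  · simp [e₀, hvq]
  · refine (hd.mul hv).congr' ?_
    filter_upwards [hpos] with p hp
    funext i
    rw [Pi.mul_apply, Pi.mul_apply, ← mul_assoc, hde p hp]
  · filter_upwards [hpos, hpar.eventually hsol] with p hp hsys
    have hq := congrArg Prod.snd hsys
    simp only [eigSystem, Prod.snd_zero, sub_eq_zero] at hq
    refine ⟨?_, fun i => ?_⟩
    · simp only [Pi.mul_apply]
      rw [hq]
      simp [e]
    · have hi := congrFun (congrArg Prod.fst hsys) i
      simp only [eigSystem, Prod.fst_zero, Pi.zero_apply, sub_eq_zero] at hi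
      change (ψ (par p)).2 * e p.1 i * (H *ᵥ (e p.1 * (ψ (par p)).1)) i
        = d p.1 i * ∑ j, p.2 i j * (d p.1 j * (ψ (par p)).1 j) at hi
      have hei : e p.1 i ≠ 0 := (Real.rpow_pos_of_pos hp _).ne'
      have h1 : ∀ j, p.1 ^ h j * (e p.1 * (ψ (par p)).1) j
          = p.1 ^ h q * (d p.1 j * (ψ (par p)).1 j) := by
        intro j
        rw [← hde p hp, Real.rpow_sub hp, Pi.mul_apply]
        have := (Real.rpow_pos_of_pos hp (h q)).ne'
        field_simp
      have h2 : p.1 ^ h i * e p.1 i = p.1 ^ h q * d p.1 i := by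
        rw [← hde p hp, Real.rpow_sub hp]
        have := (Real.rpow_pos_of_pos hp (h q)).ne'
        field_simp
      have h3 : p.1 ^ (2 * h q) = p.1 ^ h q * p.1 ^ h q := by
        rw [two_mul, Real.rpow_add hp]
      simp only [h1]
      have h4 : ∑ j, p.2 i j * (p.1 ^ h q * (d p.1 j * (ψ (par p)).1 j))
          = p.1 ^ h q * ∑ j, p.2 i j * (d p.1 j * (ψ (par p)).1 j) := by
        rw [Finset.mul_sum]
        exact Finset.sum_congr rfl fun j _ => by ring
      rw [h4, h3]
      refine mul_left_cancel₀ hei ?_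
      generalize (∑ j, p.2 i j * (d p.1 j * (ψ (par p)).1 j)) = S at *
      linear_combination p.1 ^ h q * p.1 ^ h q * hi - p.1 ^ h q * S * h2

lemma isHermitian_conj {n : ℕ} (P : Matrix (Fin n) (Fin n) ℝ) (h : Fin n → ℝ) (a : ℝ)
    {A : Matrix (Fin n) (Fin n) ℝ} (hA : A.IsSymm) :
    (P * Dmat h a * A * Dmat h a * Pᵀ).IsHermitian := by
  rw [Matrix.IsHermitian, conjTranspose_eq_transpose_of_trivial]
  simp only [Matrix.transpose_mul, Matrix.transpose_transpose, hA.eq, Dmat,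
    Matrix.diagonal_transpose, Matrix.mul_assoc]

lemma posDef_inv_mul_transpose {n : ℕ} {P : Matrix (Fin n) (Fin n) ℝ} (hP : IsUnit P) :
    (P⁻¹ * P⁻¹ᵀ).PosDef := by
  have := Matrix.PosDef.one (n := Fin n) (R := ℝ)
  have h2 := this.mul_mul_conjTranspose_same (B := P⁻¹)
    (Matrix.vecMul_injective_of_isUnit (Matrix.isUnit_nonsing_inv_iff.2 hP))
  simpa using h2

/-- The solutions of the rescaled systems for `q = 1, …, n` are the whole spectrum, in order. -/
lemma eigR_eq_scaled {n : ℕ} {P A₀ : Matrix (Fin n) (Fin n) ℝ} (hP : IsUnit P)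
    {h : Fin n → ℝ} (hmono : StrictMono h) {ξ : Fin n → ℝ} (hξ : ∀ q, 0 < ξ q)
    {y : Fin n → ℝ × Matrix (Fin n) (Fin n) ℝ → Fin n → ℝ}
    {s : Fin n → ℝ × Matrix (Fin n) (Fin n) ℝ → ℝ}
    (hs : ∀ q, Tendsto (s q) (atTop ×ˢ 𝓝 A₀) (𝓝 (ξ q)))
    (hsol : ∀ q, ∀ᶠ p in atTop ×ˢ 𝓝 A₀, y q p q = 1 ∧
      ∀ i, p.1 ^ (2 * h q) * s q p * ((P⁻¹ * P⁻¹ᵀ) *ᵥ y q p) i =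
        p.1 ^ h i * ∑ j, p.2 i j * (p.1 ^ h j * y q p j)) :
    ∀ᶠ p in atTop ×ˢ 𝓝 A₀, p.2.IsSymm → ∀ q,
      eigR (P * Dmat h p.1 * p.2 * Dmat h p.1 * Pᵀ) q = p.1 ^ (2 * h q) * s q p := by
  have hpos : ∀ᶠ p : ℝ × Matrix (Fin n) (Fin n) ℝ in atTop ×ˢ 𝓝 A₀, 0 < p.1 :=
    tendsto_fst.eventually (eventually_gt_atTop 0)
  -- distinct exponents separate the scales of the eigenvalues
  have hlt : ∀ q q' : Fin n, ∀ᶠ p in atTop ×ˢ 𝓝 A₀, q < q' →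
      p.1 ^ (2 * h q) * s q p < p.1 ^ (2 * h q') * s q' p := by
    intro q q'
    by_cases hqq : q < q'
    · have h1 : Tendsto (fun p : ℝ × Matrix (Fin n) (Fin n) ℝ =>
          p.1 ^ (2 * (h q' - h q)) * s q' p) (atTop ×ˢ 𝓝 A₀) atTop :=
        ((tendsto_rpow_atTop (by linarith [hmono hqq])).comp tendsto_fst).atTop_mul_pos
          (hξ q') (hs q')
      filter_upwards [hpos, h1.eventually_gt_atTop (ξ q + 1),
        (hs q).eventually_lt_const (lt_add_one (ξ q))] with p hp h2 h3 _
      have h4 : p.1 ^ (2 * h q') = p.1 ^ (2 * h q) * p.1 ^ (2 * (h q' - h q)) := by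
        rw [← Real.rpow_add hp]; congr 1; ring
      rw [h4, mul_assoc]
      exact mul_lt_mul_of_pos_left (h3.trans h2) (Real.rpow_pos_of_pos hp _)
    · exact Eventually.of_forall fun p hp => absurd hp hqq
  filter_upwards [eventually_all.2 hsol, eventually_all.2 fun q => eventually_all.2 (hlt q)]
    with p hp hlt hsym q
  have hPi : P * P⁻¹ = 1 := Matrix.mul_nonsing_inv P ((Matrix.isUnit_iff_isUnit_det P).1 hP)
  have hPt : Pᵀ * P⁻¹ᵀ = 1 := by
    rw [← Matrix.transpose_mul, Matrix.nonsing_inv_mul P ((Matrix.isUnit_iff_isUnit_det P).1 hP),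
      Matrix.transpose_one]
  have := eigR_eq_of_eigenpairs (isHermitian_conj P h p.1 hsym)
    (l := fun q => p.1 ^ (2 * h q) * s q p) (fun q q' hqq => hlt q q' hqq) ?_
  · rw [this]
  intro q
  obtain ⟨hq, heq⟩ := hp q
  have hx : Pᵀ *ᵥ (P⁻¹ᵀ *ᵥ y q p) = y q p := by rw [mulVec_mulVec, hPt, one_mulVec]
  refine ⟨P⁻¹ᵀ *ᵥ y q p, ?_, ?_⟩
  · intro h0
    rw [h0, mulVec_zero] at hx
    rw [← hx] at hq
    simp at hq
  · have h1 : Dmat h p.1 *ᵥ (p.2 *ᵥ (Dmat h p.1 *ᵥ y q p))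
        = (p.1 ^ (2 * h q) * s q p) • ((P⁻¹ * P⁻¹ᵀ) *ᵥ y q p) := by
      funext i
      rw [Pi.smul_apply, smul_eq_mul, heq i, Dmat, mulVec_diagonal]
      congr 1
      simp only [mulVec, dotProduct]
      refine Finset.sum_congr rfl fun j _ => ?_
      have := mulVec_diagonal (fun i => p.1 ^ h i) (y q p) j
      simp only [mulVec, dotProduct] at this
      rw [this]
    simp only [← mulVec_mulVec] at h1 ⊢
    rw [hx, h1, mulVec_smul, mulVec_mulVec, hPi, one_mulVec]

/-- Exact difference formula: for eigenpairs `(t, y)`, `(t₀, y₀)` of two pencils sharing the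
symmetric `H`, `(t - t₀) y₀ᵀ H y = (D y₀)ᵀ (A - A₀) (D y)`. -/
lemma eigenpair_difference {n : ℕ} {H A A₀ : Matrix (Fin n) (Fin n) ℝ} (hH : H.IsSymm)
    (hA₀ : A₀.IsSymm) (D : Fin n → ℝ) {y y₀ : Fin n → ℝ} {t t₀ : ℝ}
    (hy : ∀ i, t * (H *ᵥ y) i = D i * ∑ j, A i j * (D j * y j))
    (hy₀ : ∀ i, t₀ * (H *ᵥ y₀) i = D i * ∑ j, A₀ i j * (D j * y₀ j)) :
    (t - t₀) * (y₀ ⬝ᵥ H *ᵥ y) = ∑ i, ∑ j, (A i j - A₀ i j) * ((D i * y₀ i) * (D j * y j)) := by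
  have h1 : t * (y₀ ⬝ᵥ H *ᵥ y) = ∑ i, ∑ j, A i j * ((D i * y₀ i) * (D j * y j)) := by
    rw [dotProduct, Finset.mul_sum]
    refine Finset.sum_congr rfl fun i _ => ?_
    rw [mul_left_comm, hy i, Finset.mul_sum, Finset.mul_sum]
    exact Finset.sum_congr rfl fun j _ => by ring
  have hsw : y₀ ⬝ᵥ H *ᵥ y = y ⬝ᵥ H *ᵥ y₀ := by
    rw [dotProduct_mulVec, ← mulVec_transpose, hH.eq, dotProduct_comm]
  have h2 : t₀ * (y₀ ⬝ᵥ H *ᵥ y) = ∑ i, ∑ j, A₀ i j * ((D i * y₀ i) * (D j * y j)) := by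
    rw [hsw, dotProduct, Finset.mul_sum, Finset.sum_comm]
    refine Finset.sum_congr rfl fun i _ => ?_
    rw [mul_left_comm, hy₀ i, Finset.mul_sum, Finset.mul_sum]
    exact Finset.sum_congr rfl fun j _ => by rw [← hA₀.apply i j]; ring
  rw [sub_mul, h1, h2, ← Finset.sum_sub_distrib]
  refine Finset.sum_congr rfl fun i _ => ?_
  rw [← Finset.sum_sub_distrib]
  exact Finset.sum_congr rfl fun j _ => by ring

/-- First-order expansion of the log-eigenvalues at `A₀`, uniformly for large `a`. The limiting
gradient is the rank-one form `κ b bᵀ`, with `b q = 1`. -/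
lemma log_eigR_expansion {n : ℕ} {P A₀ : Matrix (Fin n) (Fin n) ℝ} (hP : IsUnit P)
    (hA₀ : A₀.PosDef) {h : Fin n → ℝ} (hmono : StrictMono h) (q : Fin n) :
    ∃ (b : Fin n → ℝ) (κ : ℝ), 0 < κ ∧ b q = 1 ∧ ∀ ε > 0,
      ∀ᶠ p in atTop ×ˢ 𝓝 A₀, p.2.IsSymm → ∀ η : ℝ, (∀ i j, |p.2 i j - A₀ i j| ≤ η) →
        |Real.log (eigR (P * Dmat h p.1 * p.2 * Dmat h p.1 * Pᵀ) q) -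
          Real.log (eigR (P * Dmat h p.1 * A₀ * Dmat h p.1 * Pᵀ) q) -
          ∑ i, ∑ j, (p.2 i j - A₀ i j) * (κ * (b i * b j))| ≤ ε * η := by
  have hH := posDef_inv_mul_transpose hP
  set H := P⁻¹ * P⁻¹ᵀ with hHdef
  have hHs : H.IsSymm := by
    change Hᵀ = H
    simpa [Matrix.IsHermitian, conjTranspose_eq_transpose_of_trivial] using hH.isHermitian
  have hAs : A₀.IsSymm := by
    change A₀ᵀ = A₀
    simpa [Matrix.IsHermitian, conjTranspose_eq_transpose_of_trivial] using hA₀.isHermitian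
  choose b c ξ y s hξ hbq hcq hs hy hz hsol using
    fun q => exists_scaled_eigenpair hH hA₀ hmono q
  have heig := eigR_eq_scaled hP hmono hξ hs hsol
  have hπ : Tendsto (fun p : ℝ × Matrix (Fin n) (Fin n) ℝ => (p.1, A₀)) (atTop ×ˢ 𝓝 A₀)
      (atTop ×ˢ 𝓝 A₀) := tendsto_fst.prodMk tendsto_const_nhds
  have hpos : ∀ᶠ p : ℝ × Matrix (Fin n) (Fin n) ℝ in atTop ×ˢ 𝓝 A₀, 0 < p.1 :=
    tendsto_fst.eventually (eventually_gt_atTop 0)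
  set γ := c q ⬝ᵥ H *ᵥ c q with hγ
  have hγpos : 0 < γ := by
    have hne : c q ≠ 0 := by
      intro h0
      have := hcq q
      rw [h0] at this
      simp at this
    simpa using hH.dotProduct_mulVec_pos hne
  let g : ℝ × Matrix (Fin n) (Fin n) ℝ → ℝ := fun p => y q (p.1, A₀) ⬝ᵥ H *ᵥ y q p
  have hg : Tendsto g (atTop ×ˢ 𝓝 A₀) (𝓝 γ) := by
    have hc : Continuous fun z : (Fin n → ℝ) × (Fin n → ℝ) => z.1 ⬝ᵥ H *ᵥ z.2 := by fun_prop
    exact (hc.tendsto (c q, c q)).comp (((hy q).comp hπ).prodMk_nhds (hy q))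
  -- By `eigenpair_difference` the rescaled eigenvalues at `p.2` and `A₀` differ exactly by
  -- `∑ i, ∑ j, (p.2 i j - A₀ i j) * m p i j`.
  let m : ℝ × Matrix (Fin n) (Fin n) ℝ → Fin n → Fin n → ℝ := fun p i j =>
    (p.1 ^ (h i - h q) * y q (p.1, A₀) i) * (p.1 ^ (h j - h q) * y q p j) / g p
  have hm : ∀ i j, Tendsto (fun p => m p i j) (atTop ×ˢ 𝓝 A₀) (𝓝 (b q i * b q j / γ)) := by
    intro i j
    refine Tendsto.div (Tendsto.mul ?_ ?_) hg hγpos.ne'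
    · exact (tendsto_pi_nhds.1 ((hz q).comp hπ) i)
    · exact (tendsto_pi_nhds.1 (hz q) j)
  refine ⟨b q, (ξ q * γ)⁻¹, by have := hξ q; positivity, hbq q, fun ε hε => ?_⟩
  set M := ∑ i, ∑ j, |b q i * b q j / γ| with hM
  have hM0 : 0 ≤ M := Finset.sum_nonneg fun i _ => Finset.sum_nonneg fun j _ => abs_nonneg _
  set ε₁ := ε / (2 * (M + 1)) with hε₁
  have hε₁pos : 0 < ε₁ := by positivity
  have hT : Tendsto (fun p => ε₁ * (∑ i, ∑ j, |m p i j|) +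
      (ξ q)⁻¹ * ∑ i, ∑ j, |m p i j - b q i * b q j / γ|) (atTop ×ˢ 𝓝 A₀)
      (𝓝 (ε₁ * M + (ξ q)⁻¹ * ∑ i : Fin n, ∑ j : Fin n, |b q i * b q j / γ - b q i * b q j / γ|)) := by
    refine Tendsto.add (Tendsto.const_mul _ ?_) (Tendsto.const_mul _ ?_)
    · exact tendsto_finsetSum _ fun i _ => tendsto_finsetSum _ fun j _ => (hm i j).abs
    · exact tendsto_finsetSum _ fun i _ => tendsto_finsetSum _ fun j _ =>
        ((hm i j).sub_const _).abs
  have hlim : ε₁ * M + (ξ q)⁻¹ * ∑ i : Fin n, ∑ j : Fin n,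
      |b q i * b q j / γ - b q i * b q j / γ| < ε := by
    simp only [sub_self, abs_zero, Finset.sum_const_zero, mul_zero, add_zero]
    rw [hε₁, div_mul_eq_mul_div, div_lt_iff₀ (by positivity)]
    nlinarith
  -- strict differentiability of `log` at the common limit of the two rescaled eigenvalues
  have hlog : ∀ᶠ p in atTop ×ˢ 𝓝 A₀, |Real.log (s q p) - Real.log (s q (p.1, A₀)) -
      (ξ q)⁻¹ * (s q p - s q (p.1, A₀))| ≤ ε₁ * |s q p - s q (p.1, A₀)| := by
    have hd := (Real.hasStrictDerivAt_log (hξ q).ne').hasStrictFDerivAt.isLittleO.def hε₁pos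
    have := (((hs q).prodMk_nhds ((hs q).comp hπ))).eventually hd
    filter_upwards [this] with p hp
    simpa [mul_comm] using hp
  have hspos := (hs q).eventually_const_lt (hξ q)
  filter_upwards [hpos, heig, hπ.eventually heig, hsol q, hπ.eventually (hsol q), hlog, hspos,
    hπ.eventually hspos, hT.eventually_lt_const hlim, hg.eventually_const_lt hγpos]
    with p hp h1 h2 h3 h4 h5 h6 h7 h8 h9 hsym η hη
  have hap := Real.rpow_pos_of_pos hp (2 * h q)
  rw [h1 hsym q, h2 hAs q, Real.log_mul hap.ne' h6.ne', Real.log_mul hap.ne' h7.ne']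
  have hdiff := eigenpair_difference hHs hAs (fun i => p.1 ^ h i) h3.2 h4.2
  have hsd : s q p - s q (p.1, A₀) = ∑ i, ∑ j, (p.2 i j - A₀ i j) * m p i j := by
    have hh : ∀ i j, (p.2 i j - A₀ i j) * m p i j = (p.2 i j - A₀ i j) *
        ((p.1 ^ h i * y q (p.1, A₀) i) * (p.1 ^ h j * y q p j)) / (p.1 ^ (2 * h q) * g p) := by
      intro i j
      simp only [m]
      rw [Real.rpow_sub hp, Real.rpow_sub hp, two_mul, Real.rpow_add hp]
      have := (Real.rpow_pos_of_pos hp (h q)).ne'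
      field_simp
    simp only [hh, ← Finset.sum_div]
    rw [← hdiff, eq_div_iff (mul_pos hap h9).ne']
    simp only [g]
    ring
  have hbound : ∀ f : Fin n → Fin n → ℝ,
      |∑ i, ∑ j, (p.2 i j - A₀ i j) * f i j| ≤ η * ∑ i, ∑ j, |f i j| := by
    intro f
    rw [Finset.mul_sum]
    refine (Finset.abs_sum_le_sum_abs _ _).trans (Finset.sum_le_sum fun i _ => ?_)
    rw [Finset.mul_sum]
    refine (Finset.abs_sum_le_sum_abs _ _).trans (Finset.sum_le_sum fun j _ => ?_)
    rw [abs_mul]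
    exact mul_le_mul_of_nonneg_right (hη i j) (abs_nonneg _)
  have hη0 : 0 ≤ η := (abs_nonneg _).trans (hη q q)
  have hlin : (ξ q)⁻¹ * (s q p - s q (p.1, A₀)) -
      ∑ i, ∑ j, (p.2 i j - A₀ i j) * ((ξ q * γ)⁻¹ * (b q i * b q j)) =
      (ξ q)⁻¹ * ∑ i, ∑ j, (p.2 i j - A₀ i j) * (m p i j - b q i * b q j / γ) := by
    rw [hsd, Finset.mul_sum, Finset.mul_sum, ← Finset.sum_sub_distrib]
    refine Finset.sum_congr rfl fun i _ => ?_
    rw [Finset.mul_sum, Finset.mul_sum, ← Finset.sum_sub_distrib]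
    refine Finset.sum_congr rfl fun j _ => ?_
    rw [mul_inv]
    ring
  have hb1 := hbound (m p)
  have hb2 := hbound (fun i j => m p i j - b q i * b q j / γ)
  rw [← hsd] at hb1
  have hξi : 0 < (ξ q)⁻¹ := inv_pos.2 (hξ q)
  calc _ = |(Real.log (s q p) - Real.log (s q (p.1, A₀)) -
          (ξ q)⁻¹ * (s q p - s q (p.1, A₀))) + ((ξ q)⁻¹ * (s q p - s q (p.1, A₀)) -
          ∑ i, ∑ j, (p.2 i j - A₀ i j) * ((ξ q * γ)⁻¹ * (b q i * b q j)))| := by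
        congr 1; ring
    _ ≤ ε₁ * (η * ∑ i, ∑ j, |m p i j|) +
        (ξ q)⁻¹ * (η * ∑ i, ∑ j, |m p i j - b q i * b q j / γ|) := by
        refine (abs_add_le _ _).trans (add_le_add ?_ ?_)
        · exact h5.trans (mul_le_mul_of_nonneg_left hb1 hε₁pos.le)
        · rw [hlin, abs_mul, abs_of_pos hξi]
          exact mul_le_mul_of_nonneg_left hb2 hξi.le
    _ = (ε₁ * (∑ i, ∑ j, |m p i j|) +
          (ξ q)⁻¹ * ∑ i, ∑ j, |m p i j - b q i * b q j / γ|) * η := by ring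
    _ ≤ ε * η := mul_le_mul_of_nonneg_right h8.le hη0

/-! ### The delta method -/

lemma sum_sum_eq_dotProduct {ι : Type*} [Fintype ι] (d : ι → ℝ) (M : Matrix ι ι ℝ) :
    ∑ i, ∑ j, d i * M i j * d j = d ⬝ᵥ (M *ᵥ d) := by
  simp [dotProduct, mulVec, Finset.mul_sum, mul_assoc]

/-- The image of a centered Gaussian law under a linear map. -/
lemma IsCenteredGaussian.map_mulVec {ι κ : Type*} [Fintype ι] [Fintype κ]
    {μG : Measure (ι → ℝ)} {C : Matrix ι ι ℝ} (hG : IsCenteredGaussian μG C) (T : Matrix κ ι ℝ) :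
    IsCenteredGaussian (μG.map fun x => T *ᵥ x) (T * C * Tᵀ) := by
  have hT : Continuous fun x : ι → ℝ => T *ᵥ x := by fun_prop
  have := hG.1
  refine ⟨Measure.isProbabilityMeasure_map hT.measurable.aemeasurable, fun c => ?_⟩
  rw [Measure.map_map (by fun_prop) hT.measurable]
  have h := hG.2 (c ᵥ* T)
  convert h using 2
  · funext x
    exact Matrix.dotProduct_mulVec c T x
  · congr 1
    rw [sum_sum_eq_dotProduct, sum_sum_eq_dotProduct, ← Matrix.mulVec_mulVec, ← Matrix.mulVec_mulVec, Matrix.mulVec_transpose,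
      Matrix.dotProduct_mulVec c T]

/-- A bilinear pairing with a symmetric matrix, written through its upper-triangular entries. -/
lemma sum_symm_eq_sum_upper {n : ℕ} {X G : Matrix (Fin n) (Fin n) ℝ} (hX : X.IsSymm)
    (hG : G.IsSymm) :
    ∑ i, ∑ j, X i j * G i j = ∑ p : {p : Fin n × Fin n // p.1 ≤ p.2},
      (G p.1.1 p.1.2 * if p.1.1 = p.1.2 then 1 else 2) * X p.1.1 p.1.2 := by
  have h1 : ∑ p : {p : Fin n × Fin n // p.1 ≤ p.2},
      (G p.1.1 p.1.2 * if p.1.1 = p.1.2 then 1 else 2) * X p.1.1 p.1.2 =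
      ∑ i, ∑ j, if i ≤ j then (G i j * if i = j then 1 else 2) * X i j else 0 := by
    rw [← Fintype.sum_prod_type' (f := fun i j : Fin n =>
      if i ≤ j then (G i j * if i = j then 1 else 2) * X i j else 0), ← Finset.sum_filter]
    exact (Finset.sum_subtype _ (by simp) (fun p : Fin n × Fin n =>
      (G p.1 p.2 * if p.1 = p.2 then 1 else 2) * X p.1 p.2)).symm
  rw [h1]
  -- Each side agrees with half the sum of itself and its transposed sum.
  have h2 : ∀ F : Fin n → Fin n → ℝ, ∑ i, ∑ j, F i j = 1 / 2 * ∑ i, ∑ j, (F i j + F j i) := by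
    intro F
    have : ∑ i, ∑ j, F j i = ∑ i, ∑ j, F i j := Finset.sum_comm
    simp only [Finset.sum_add_distrib, this]
    ring
  rw [h2, h2 fun i j => if i ≤ j then (G i j * if i = j then 1 else 2) * X i j else 0]
  congr 1
  refine Finset.sum_congr rfl fun i _ => Finset.sum_congr rfl fun j _ => ?_
  have hx := hX.apply i j
  have hg := hG.apply i j
  rw [hx, hg]
  rcases lt_trichotomy i j with hij | rfl | hij
  · rw [if_pos hij.le, if_neg hij.ne, if_neg (not_le.2 hij)]; ring
  · simp; ring
  · rw [if_neg (not_le.2 hij), if_pos hij.le, if_neg hij.ne]; ring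

/-- Convergence in distribution of measurable vectors, tested on bounded continuous functions,
in the form used by Mathlib, with the identity as the limiting random variable. -/
lemma tendstoInDistribution_iff_id {Ω E : Type*} [MeasurableSpace Ω] {μ : Measure Ω}
    [IsProbabilityMeasure μ] [TopologicalSpace E] [MeasurableSpace E] [BorelSpace E]
    [SecondCountableTopology E] [TopologicalSpace.PseudoMetrizableSpace E]
    {X : ℕ → Ω → E} (hX : ∀ k, Measurable (X k)) {μE : Measure E} [IsProbabilityMeasure μE] :
    _root_.TendstoInDistribution μ X μE ↔
      MeasureTheory.TendstoInDistribution X atTop id (fun _ => μ) μE := by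
  have key : ∀ (f : BoundedContinuousFunction E ℝ) k,
      ∫ ω, f (X k ω) ∂μ = ∫ x, f x ∂(μ.map (X k)) := fun f k =>
    (integral_map (hX k).aemeasurable f.continuous.aestronglyMeasurable).symm
  constructor
  · intro h
    refine ⟨fun k => (hX k).aemeasurable, measurable_id.aemeasurable, ?_⟩
    refine ProbabilityMeasure.tendsto_iff_forall_integral_tendsto.2 fun f => ?_
    simpa [key] using h f
  · intro h f
    have := ProbabilityMeasure.tendsto_iff_forall_integral_tendsto.1 h.tendsto f
    simpa [key] using this

/-- The first-order delta method: if `X` converges in distribution and `Y` is, uniformly on every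
event `‖X‖ ≤ R`, asymptotically equal to a linear image of `X`, then `Y` converges to the linear
image of the limit. -/
lemma tendstoInDistribution_of_linearization {ι κ Ω : Type*} [Fintype ι] [Fintype κ]
    [MeasurableSpace Ω] {μ : Measure Ω} [IsProbabilityMeasure μ]
    {X : ℕ → Ω → ι → ℝ} {Y : ℕ → Ω → κ → ℝ} (hX : ∀ k, Measurable (X k))
    (hY : ∀ k, Measurable (Y k)) {μG : Measure (ι → ℝ)} [IsProbabilityMeasure μG]
    (hXG : _root_.TendstoInDistribution μ X μG) (T : Matrix κ ι ℝ)
    (hlin : ∀ ε > 0, ∀ R > 0, ∀ᶠ k in atTop, ∀ ω, ‖X k ω‖ ≤ R → ‖Y k ω - T *ᵥ X k ω‖ ≤ ε) :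
    _root_.TendstoInDistribution μ Y (μG.map fun x => T *ᵥ x) := by
  have hT : Continuous fun x : ι → ℝ => T *ᵥ x := by fun_prop
  have hX' := (tendstoInDistribution_iff_id hX).1 hXG
  have hTX := hX'.continuous_comp hT
  have hd : TendstoInMeasure μ (Y - fun n => (fun x : ι → ℝ => T *ᵥ x) ∘ X n) atTop 0 := by
    rw [tendstoInMeasure_iff_norm]
    intro ε hε
    rw [ENNReal.tendsto_atTop_zero]
    intro δ hδ
    -- Choose `R` so that the limit law puts mass less than `δ` on `R ≤ ‖x‖`.
    obtain ⟨R, hR0, hR⟩ : ∃ R : ℝ, 0 < R ∧ μG {x | R ≤ ‖x‖} < δ := by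
      have hanti : Antitone fun m : ℕ => {x : ι → ℝ | (m : ℝ) ≤ ‖x‖} := by
        intro m m' hm x hx
        have hx' : (m' : ℝ) ≤ ‖x‖ := hx
        exact (Nat.cast_le.2 hm).trans hx'
      have hmeas : ∀ m : ℕ, NullMeasurableSet {x : ι → ℝ | (m : ℝ) ≤ ‖x‖} μG := fun m =>
        (measurableSet_le measurable_const measurable_norm).nullMeasurableSet
      have hlim := tendsto_measure_iInter_atTop hmeas hanti ⟨0, measure_ne_top _ _⟩
      have hempty : ⋂ m : ℕ, {x : ι → ℝ | (m : ℝ) ≤ ‖x‖} = ∅ := by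
        ext x
        simp only [Set.mem_iInter, Set.mem_ofPred_eq, Set.mem_empty_iff_false, iff_false, not_forall,
          not_le]
        exact exists_nat_gt ‖x‖
      rw [hempty, measure_empty] at hlim
      obtain ⟨m, hm, hm0⟩ := ((hlim.eventually (gt_mem_nhds hδ)).and (eventually_gt_atTop 0)).exists
      exact ⟨m, by exact_mod_cast hm0, hm⟩
    have hclosed : IsClosed {x : ι → ℝ | R ≤ ‖x‖} := isClosed_le continuous_const continuous_norm
    have hsup := ProbabilityMeasure.limsup_measure_closed_le_of_tendsto hX'.tendsto hclosed
    have hev : ∀ᶠ k in atTop, μ.map (X k) {x | R ≤ ‖x‖} < δ := by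
      refine eventually_lt_of_limsup_lt (lt_of_le_of_lt hsup ?_)
      simpa using hR
    obtain ⟨N, hN⟩ := eventually_atTop.1 (hev.and (hlin (ε / 2) (half_pos hε) R hR0))
    refine ⟨N, fun k hk => ?_⟩
    obtain ⟨hk1, hk2⟩ := hN k hk
    rw [Measure.map_apply (hX k) hclosed.measurableSet] at hk1
    refine (measure_mono fun ω hω => ?_).trans hk1.le
    by_contra hlt
    have h1 := hk2 ω (not_le.1 hlt).le
    have h2 : ε ≤ ‖Y k ω - T *ᵥ X k ω‖ := by simpa using hω
    linarith
  have hfin := tendstoInDistribution_of_tendstoInMeasure_sub Y _ hTX hd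
    fun k => (hY k).aemeasurable
  have : IsProbabilityMeasure (μG.map fun x => T *ᵥ x) :=
    Measure.isProbabilityMeasure_map hT.measurable.aemeasurable
  intro f
  have := ProbabilityMeasure.tendsto_iff_forall_integral_tendsto.1 hfin.tendsto f
  have hYint : ∀ k, ∫ ω, f (Y k ω) ∂μ = ∫ x, f x ∂(μ.map (Y k)) := fun k =>
    (integral_map (hY k).aemeasurable f.continuous.aestronglyMeasurable).symm
  simpa [hYint, Function.comp_def] using this

/-! ### Asymptotic normality of the log-eigenvalues -/

lemma posDef_Emat_mul {n : ℕ} {B : Matrix (Fin n) (Fin n) ℝ} (hB : B.PosDef) (h : Fin n → ℝ)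
    (j : ℤ) : (Emat h j * B * Emat h j).PosDef := by
  have hE : (Emat h j)ᴴ = Emat h j := by simp [Emat]
  have hu : IsUnit (Emat h j) := by
    rw [Matrix.isUnit_iff_isUnit_det, Emat, Matrix.det_diagonal, isUnit_iff_ne_zero]
    exact Finset.prod_ne_zero_iff.2 fun i _ => (Real.rpow_pos_of_pos two_pos _).ne'
  have := hB.mul_mul_conjTranspose_same (B := Emat h j)
    (Matrix.vecMul_injective_iff_isUnit.2 hu)
  rwa [hE] at this

lemma measurable_mul_entries {n : ℕ} {Ω : Type*} [MeasurableSpace Ω]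
    {X : Ω → Matrix (Fin n) (Fin n) ℝ} (hX : ∀ i j, Measurable fun ω => X ω i j)
    (L R : Matrix (Fin n) (Fin n) ℝ) (i j : Fin n) : Measurable fun ω => (L * X ω * R) i j := by
  simp only [Matrix.mul_apply]
  fun_prop

/-- By symmetry, a bound on the normalized deviations in the upper triangle controls every
entry. -/
lemma abs_sub_le_of_upper {n : ℕ} {A A₀ : Matrix (Fin n) (Fin n) ℝ} (hA : A.IsSymm)
    (hA₀ : A₀.IsSymm) {s R : ℝ} (hs : 0 < s)
    (hR : ∀ p : {p : Fin n × Fin n // p.1 ≤ p.2},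
      |s * (A p.1.1 p.1.2 - A₀ p.1.1 p.1.2)| ≤ R) (i j : Fin n) : |A i j - A₀ i j| ≤ R / s := by
  rw [le_div_iff₀ hs, mul_comm]
  have key : ∀ i j : Fin n, i ≤ j → s * |A i j - A₀ i j| ≤ R := fun i j hij => by
    simpa [abs_mul, abs_of_pos hs] using hR ⟨(i, j), hij⟩
  rcases le_total i j with hij | hij
  · exact key i j hij
  · rw [← hA.apply i j, ← hA₀.apply i j]
    exact key j i hij

/-- The log-eigenvalue expansion along `a ν → ∞`, after normalization by `s ν → ∞`: uniformly over
symmetric `A` whose normalized upper-triangular deviation from `A₀` is at most `R`. -/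
lemma scaled_log_eigR_expansion {n : ℕ} {P A₀ : Matrix (Fin n) (Fin n) ℝ} (hP : IsUnit P)
    (hA₀ : A₀.PosDef) {h : Fin n → ℝ} (hmono : StrictMono h) (q : Fin n) :
    ∃ ℓ : {p : Fin n × Fin n // p.1 ≤ p.2} → ℝ, ℓ ≠ 0 ∧
      ∀ (a s : ℕ → ℝ), Tendsto a atTop atTop → Tendsto s atTop atTop →
      ∀ ε > 0, ∀ R > 0, ∀ᶠ ν in atTop, ∀ A : Matrix (Fin n) (Fin n) ℝ, A.IsSymm →
        (∀ p : {p : Fin n × Fin n // p.1 ≤ p.2},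
          |s ν * (A p.1.1 p.1.2 - A₀ p.1.1 p.1.2)| ≤ R) →
        |s ν * (Real.log (eigR (P * Dmat h (a ν) * A * Dmat h (a ν) * Pᵀ) q) -
            Real.log (eigR (P * Dmat h (a ν) * A₀ * Dmat h (a ν) * Pᵀ) q)) -
          ∑ p, ℓ p * (s ν * (A p.1.1 p.1.2 - A₀ p.1.1 p.1.2))| ≤ ε := by
  obtain ⟨b, κ, hκ, hbq, hexp⟩ := log_eigR_expansion hP hA₀ hmono q
  have hAs : A₀.IsSymm := by
    change A₀ᵀ = A₀
    simpa [Matrix.IsHermitian, conjTranspose_eq_transpose_of_trivial] using hA₀.isHermitian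
  set G : Matrix (Fin n) (Fin n) ℝ := Matrix.of fun i j => κ * (b i * b j) with hG
  have hGs : G.IsSymm := by
    ext i j
    simp [hG, mul_comm]
  refine ⟨fun p => G p.1.1 p.1.2 * if p.1.1 = p.1.2 then 1 else 2, ?_, ?_⟩
  · intro h0
    have := congrFun h0 ⟨(q, q), le_rfl⟩
    simp [hG, hbq, hκ.ne'] at this
  intro a s ha hs ε hε R hR
  obtain ⟨pa, hpa, pA, hpA, hprod⟩ := eventually_prod_iff.1 (hexp (ε / R) (div_pos hε hR))
  -- Entrywise closeness to `A₀` gives membership in the neighbourhood from the expansion.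
  obtain ⟨δ, hδ, hball⟩ : ∃ δ > 0, ∀ A : Matrix (Fin n) (Fin n) ℝ,
      (∀ i j, |A i j - A₀ i j| ≤ δ) → pA A := by
    have hpA' : ∀ᶠ A : Fin n → Fin n → ℝ in 𝓝 (A₀ : Fin n → Fin n → ℝ), pA A := hpA
    obtain ⟨δ, hδ, hb⟩ := Metric.nhds_basis_closedBall.eventually_iff.1 hpA'
    refine ⟨δ, hδ, fun A hA => hb (Metric.mem_closedBall.2 ?_)⟩
    refine (dist_pi_le_iff hδ.le).2 fun i => (dist_pi_le_iff hδ.le).2 fun j => ?_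
    simpa [Real.dist_eq] using hA i j
  filter_upwards [ha.eventually hpa, hs.eventually_gt_atTop 0,
    hs.eventually_ge_atTop (R / δ)] with ν h1 hs0 hsδ A hA hAR
  have hent := abs_sub_le_of_upper hA hAs hs0 hAR
  have hsmall : R / s ν ≤ δ := by
    rw [div_le_iff₀ hδ] at hsδ
    rw [div_le_iff₀ hs0]
    linarith
  have hmain := hprod h1 (hball A fun i j => (hent i j).trans hsmall) hA (R / s ν) hent
  have hsum : ∑ i, ∑ j, (A i j - A₀ i j) * (κ * (b i * b j)) =
      ∑ p : {p : Fin n × Fin n // p.1 ≤ p.2},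
        (G p.1.1 p.1.2 * if p.1.1 = p.1.2 then 1 else 2) * (A p.1.1 p.1.2 - A₀ p.1.1 p.1.2) :=
    sum_symm_eq_sum_upper (X := A - A₀) (G := G) (hA.sub hAs) hGs
  simp only at hmain
  rw [hsum] at hmain
  have hfac : ∑ p : {p : Fin n × Fin n // p.1 ≤ p.2},
        (G p.1.1 p.1.2 * if p.1.1 = p.1.2 then 1 else 2) *
          (s ν * (A p.1.1 p.1.2 - A₀ p.1.1 p.1.2)) =
      s ν * ∑ p : {p : Fin n × Fin n // p.1 ≤ p.2},
        (G p.1.1 p.1.2 * if p.1.1 = p.1.2 then 1 else 2) *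
          (A p.1.1 p.1.2 - A₀ p.1.1 p.1.2) := by
    rw [Finset.mul_sum]
    exact Finset.sum_congr rfl fun p _ => by ring
  rw [hfac, ← mul_sub, abs_mul, abs_of_pos hs0]
  calc _ ≤ s ν * (ε / R * (R / s ν)) := mul_le_mul_of_nonneg_left hmain hs0.le
    _ = ε := by field_simp

/-- Theorem 3.2, asymptotic normality of wavelet log-eigenvalues: if the
stacked, normalized upper-triangular entries `√K_{ν,j} vec_S(B̂_ν(j) − B(j))`, `j = j₁,…,j₂`,
are asymptotically centered Gaussian with positive definite covariance, then the stacked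
normalized wavelet log-eigenvalue differences
`√K_{ν,j} (log λ_q(W_ν(j)) − log λ_q(W̄_ν(j)))`, `q = 1,…,n`, `j = j₁,…,j₂`, converge in
distribution to a centered Gaussian `N(0, Σ_λ)` with strictly positive diagonal variances. -/
theorem stmt11 {n : ℕ}
    {Ω : Type*} [MeasurableSpace Ω] (μ : Measure Ω) [IsProbabilityMeasure μ]
    (h : Fin n → ℝ) (hmono : StrictMono h)
    (h0 : ∀ i, 0 < h i) (h1 : ∀ i, h i < 1)
    (P : Matrix (Fin n) (Fin n) ℝ) (hP : IsUnit P)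
    (hPcol : ∀ j, ∑ i, P i j ^ 2 = 1)
    (j₁ j₂ : ℤ) (hj : j₁ ≤ j₂)
    (B : Matrix (Fin n) (Fin n) ℝ) (hB : B.PosDef)
    (a : ℕ → ℝ) (ha_pos : ∀ ν, 0 < a ν) (ha : Tendsto a atTop atTop)
    (hK : ∀ j : ℤ, j₁ ≤ j → j ≤ j₂ →
      Tendsto (fun ν : ℕ => (ν : ℝ) / (a ν * 2 ^ j)) atTop atTop)
    (Bhat : ℕ → ℤ → Ω → Matrix (Fin n) (Fin n) ℝ)
    (hBhat_meas : ∀ ν j (i i' : Fin n), Measurable fun ω => Bhat ν j ω i i')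
    (hBhat_symm : ∀ ν j ω, (Bhat ν j ω).IsSymm)
    (hBhat_pd : ∀ ν j, ∀ᵐ ω ∂μ, (Bhat ν j ω).PosDef)
    (hCLT : ∃ (μG : Measure ((↑(Finset.Icc j₁ j₂) × {p : Fin n × Fin n // p.1 ≤ p.2}) → ℝ))
      (C : Matrix (↑(Finset.Icc j₁ j₂) × {p : Fin n × Fin n // p.1 ≤ p.2})
        (↑(Finset.Icc j₁ j₂) × {p : Fin n × Fin n // p.1 ≤ p.2}) ℝ),
      C.PosDef ∧ IsCenteredGaussian μG C ∧
      TendstoInDistribution μ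
        (fun ν ω x =>
          Real.sqrt ((ν : ℝ) / (a ν * 2 ^ (x.1 : ℤ))) *
            (Bhat ν (x.1 : ℤ) ω (x.2 : Fin n × Fin n).1 (x.2 : Fin n × Fin n).2 -
              (Emat h (x.1 : ℤ) * B * Emat h (x.1 : ℤ))
                (x.2 : Fin n × Fin n).1 (x.2 : Fin n × Fin n).2))
        μG) :
    ∃ (μG' : Measure ((↑(Finset.Icc j₁ j₂) × Fin n) → ℝ))
      (SigLam : Matrix (↑(Finset.Icc j₁ j₂) × Fin n) (↑(Finset.Icc j₁ j₂) × Fin n) ℝ),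
      IsCenteredGaussian μG' SigLam ∧
      (∀ x : ↑(Finset.Icc j₁ j₂) × Fin n, 0 < SigLam x x) ∧
      TendstoInDistribution μ
        (fun ν ω x =>
          Real.sqrt ((ν : ℝ) / (a ν * 2 ^ (x.1 : ℤ))) *
            (Real.log (eigR (P * Dmat h (a ν) * Bhat ν (x.1 : ℤ) ω * Dmat h (a ν) * Pᵀ) x.2) -
             Real.log (eigR
               (P * Dmat h (a ν) * (Emat h (x.1 : ℤ) * B * Emat h (x.1 : ℤ)) * Dmat h (a ν) * Pᵀ)
               x.2)))
        μG' := by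
  obtain ⟨μG, C, hC, hG, hX⟩ := hCLT
  have hA₀ := fun j : ℤ => posDef_Emat_mul hB h j
  choose ℓ hℓ hexp using fun x : ↑(Finset.Icc j₁ j₂) × Fin n =>
    scaled_log_eigR_expansion hP (hA₀ x.1) hmono x.2
  -- The Jacobian is block diagonal in the scale `j`.
  set T : Matrix (↑(Finset.Icc j₁ j₂) × Fin n)
      (↑(Finset.Icc j₁ j₂) × {p : Fin n × Fin n // p.1 ≤ p.2}) ℝ :=
    Matrix.of fun x y => if x.1 = y.1 then ℓ x y.2 else 0 with hTdef
  have hTmul : ∀ v x, (T *ᵥ v) x = ∑ p, ℓ x p * v (x.1, p) := by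
    intro v x
    simp [hTdef, Matrix.mulVec, dotProduct, Fintype.sum_prod_type]
  have hGp := hG.1
  refine ⟨_, _, hG.map_mulVec T, fun x => ?_, ?_⟩
  · have hne : T x ≠ 0 := by
      intro h0
      refine hℓ x (funext fun p => ?_)
      simpa [hTdef] using congrFun h0 (x.1, p)
    have hpos := hC.dotProduct_mulVec_pos hne
    have : (T * C * Tᵀ) x x = star (T x) ⬝ᵥ (C *ᵥ T x) := by
      rw [Matrix.mul_assoc, star_trivial]
      rfl
    rwa [this]
  · refine tendstoInDistribution_of_linearization (fun ν => ?_) (fun ν => ?_) hX T ?_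
    · exact measurable_pi_lambda _ fun x => ((hBhat_meas ν _ _ _).sub_const _).const_mul _
    · refine measurable_pi_lambda _ fun x => ?_
      have hm := measurable_eigR
        (X := fun ω => P * Dmat h (a ν) * Bhat ν (x.1 : ℤ) ω * Dmat h (a ν) * Pᵀ)
        (fun i i' => by
          simpa only [Matrix.mul_assoc] using
            measurable_mul_entries (hBhat_meas ν x.1) (P * Dmat h (a ν)) (Dmat h (a ν) * Pᵀ) i i')
        (fun ω => isHermitian_conj P h (a ν) (hBhat_symm ν x.1 ω)) x.2
      exact ((Real.measurable_log.comp hm).sub_const _).const_mul _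
    · intro ε hε R hR
      have hall : ∀ x : ↑(Finset.Icc j₁ j₂) × Fin n, _ := fun x =>
        hexp x a (fun ν => Real.sqrt ((ν : ℝ) / (a ν * 2 ^ (x.1 : ℤ)))) ha
          (Real.tendsto_sqrt_atTop.comp
            (hK x.1 (Finset.mem_Icc.1 x.1.2).1 (Finset.mem_Icc.1 x.1.2).2)) ε hε R hR
      filter_upwards [eventually_all.2 hall] with ν hν ω hω
      rw [pi_norm_le_iff_of_nonneg hε.le]
      intro x
      rw [Pi.sub_apply, hTmul, Real.norm_eq_abs]
      refine hν x _ (hBhat_symm ν x.1 ω) fun p => ?_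
      exact (norm_le_pi_norm _ (x.1, p)).trans hω
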